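/- Let $n \ge 0$ and let $P$ be a partial order on $\{1,\dots,n\}$ that is a unit interval order, i.e. there is a map $r : \{1,\dots,n\} \to \mathbb{R}$ such that for all $i, j$: $i <_P j$ if and only if $r(i) + 1 < r(j)$. Define the altitude of $i$ by $\alpha(i) = |\{j : j \le_P i\}| - |\{j : i \le_P j\}|$, and call $P$ canonically labeled if, for all $i, j$, $\alpha(i) < \alpha(j)$ implies $i < j$ as integers. Then $P$ is canonically labeled if and only if there exists a map $q : \{1,\dots,n\} \to \mathbb{R}$ with $q(1) < q(2) < \dots < q(n)$ such that for all $i, j \in \{1,\dots,n\}$: $i <_P j$ if and only if $q(i) + 1 < q(j)$. -/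

import Mathlib

/-- `q` gives an interval representation `{[q i, q i + 1]}` of `P`: `i <_P j` if and only if the
interval of `i` lies strictly to the left of the interval of `j`. -/
def IsIntervalRep {n : ℕ} (P : PartialOrder (Fin n)) (q : Fin n → ℝ) : Prop :=
  ∀ i j : Fin n, P.lt i j ↔ q i + 1 < q j

/-- `P` is a unit interval order if it has an interval representation. -/
def IsUnitIntervalOrder {n : ℕ} (P : PartialOrder (Fin n)) : Prop :=
  ∃ q : Fin n → ℝ, IsIntervalRep P q

open Classical in
/-- The altitude of `i`: `|{j : j ≤_P i}| - |{j : i ≤_P j}|`. -/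
noncomputable def altitude {n : ℕ} (P : PartialOrder (Fin n)) (i : Fin n) : ℤ :=
  ((Finset.univ.filter (fun j : Fin n => P.le j i)).card : ℤ) -
    ((Finset.univ.filter (fun j : Fin n => P.le i j)).card : ℤ)

/-- `P` is canonically labeled if `α(i) < α(j)` implies `i < j` as integers. The labels are
compared through `Fin.val`, so that the order meant is the one of the integers and not `P`. -/
def IsCanonicallyLabeled {n : ℕ} (P : PartialOrder (Fin n)) : Prop :=
  ∀ i j : Fin n, altitude P i < altitude P j → i.val < j.val

/-! If `r` represents a unit interval order, then moving `r i` to the right only adds predecessors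
of `i` and removes successors, so the altitude is weakly increasing in `r`, and elements of equal
altitude have the same predecessors and the same successors. Hence `r` may be replaced by its value
at one chosen element of each altitude class, after which it is weakly increasing in the altitude,
and so in any canonical labeling. As only finitely many inequalities are strict, stretching the unit
slightly leaves room to break the remaining ties in the order of the labels. -/

/-- A unit interval representation of an arbitrary relation `R` over an ordered structure `K`: the
counterpart of `IsIntervalRep` that leaves any order on `α` free to serve as a labeling. -/
def IsUnitIntervalRep {α K : Type*} [Add K] [One K] [LT K] (R : α → α → Prop) (q : α → K) : Prop :=
  ∀ i j, R i j ↔ q i + 1 < q j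

/-- The altitude of `i` with respect to a relation `R`, meant for a strict order: the number of
`R`-predecessors minus the number of `R`-successors. Counting strictly agrees with `altitude`, as
reflexivity adds one to both counts. On infinite types `Set.ncard` may take its junk value `0`. -/
noncomputable def relAltitude {α : Type*} (R : α → α → Prop) (i : α) : ℤ :=
  ({k | R k i}.ncard : ℤ) - {k | R i k}.ncard

theorem ncard_Iic_eq_ncard_Iio_add_one {α : Type*} [PartialOrder α] {a : α}
    (ha : (Set.Iio a).Finite) : (Set.Iic a).ncard = (Set.Iio a).ncard + 1 := by
  rw [← Set.Iio_insert, Set.ncard_insert_of_notMem Set.self_notMem_Iio ha]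

theorem ncard_Ici_eq_ncard_Ioi_add_one {α : Type*} [PartialOrder α] {a : α}
    (ha : (Set.Ioi a).Finite) : (Set.Ici a).ncard = (Set.Ioi a).ncard + 1 :=
  ncard_Iic_eq_ncard_Iio_add_one (a := OrderDual.toDual a) ha

theorem altitude_eq_relAltitude {n : ℕ} (P : PartialOrder (Fin n)) :
    altitude P = relAltitude P.lt := by
  ext i
  have card_le : {k | P.le k i}.ncard = {k | P.lt k i}.ncard + 1 :=
    @ncard_Iic_eq_ncard_Iio_add_one _ P i (Set.toFinite _)
  have card_ge : {k | P.le i k}.ncard = {k | P.lt i k}.ncard + 1 :=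
    @ncard_Ici_eq_ncard_Ioi_add_one _ P i (Set.toFinite _)
  simp only [altitude, relAltitude, ← Set.ncard_coe_finset, Finset.coe_filter_univ, card_le,
    card_ge, Nat.cast_add, add_sub_add_right_eq_sub]

namespace IsUnitIntervalRep

variable {α K : Type*} {R : α → α → Prop} {r : α → K} {i i' j j' : α}

section Preorder

variable [Add K] [One K] [Preorder K]

theorem predecessors_mono (hr : IsUnitIntervalRep R r) (hij : r i ≤ r j) :
    {k | R k i} ⊆ {k | R k j} :=
  fun k hki => (hr k j).2 (((hr k i).1 hki).trans_le hij)

theorem successors_anti [AddRightMono K] (hr : IsUnitIntervalRep R r) (hij : r i ≤ r j) :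
    {k | R j k} ⊆ {k | R i k} :=
  fun k hjk => (hr i k).2 ((add_le_add_left hij 1).trans_lt ((hr j k).1 hjk))

theorem relAltitude_mono [AddRightMono K] [Finite α] (hr : IsUnitIntervalRep R r)
    (hij : r i ≤ r j) : relAltitude R i ≤ relAltitude R j :=
  sub_le_sub (Nat.cast_le.2 (Set.ncard_le_ncard (hr.predecessors_mono hij)))
    (Nat.cast_le.2 (Set.ncard_le_ncard (hr.successors_anti hij)))

end Preorder

section LinearOrder

variable [Add K] [One K] [LinearOrder K] [AddRightMono K] [Finite α]

theorem lt_of_relAltitude_lt (hr : IsUnitIntervalRep R r)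
    (hij : relAltitude R i < relAltitude R j) : r i < r j :=
  lt_of_not_ge fun hji => hij.not_ge (hr.relAltitude_mono hji)

theorem predecessors_eq_and_successors_eq_of_relAltitude_eq (hr : IsUnitIntervalRep R r)
    (h : relAltitude R i = relAltitude R j) :
    {k | R k i} = {k | R k j} ∧ {k | R i k} = {k | R j k} := by
  wlog hij : r i ≤ r j generalizing i j
  · exact (this h.symm (le_of_not_ge hij)).imp Eq.symm Eq.symm
  have hpred := hr.predecessors_mono hij
  have hsucc := hr.successors_anti hij
  have hpred_card := Set.ncard_le_ncard hpred
  have hsucc_card := Set.ncard_le_ncard hsucc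
  unfold relAltitude at h
  exact ⟨Set.eq_of_subset_of_ncard_le hpred (by lia),
    (Set.eq_of_subset_of_ncard_le hsucc (by lia)).symm⟩

theorem rel_congr (hr : IsUnitIntervalRep R r) (hi : relAltitude R i = relAltitude R i')
    (hj : relAltitude R j = relAltitude R j') : R i j ↔ R i' j' :=
  (Set.ext_iff.1 (hr.predecessors_eq_and_successors_eq_of_relAltitude_eq hj).1 i).trans
    (Set.ext_iff.1 (hr.predecessors_eq_and_successors_eq_of_relAltitude_eq hi).2 j')

theorem strictMono_comp_rangeSplitting (hr : IsUnitIntervalRep R r) :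
    StrictMono (r ∘ Set.rangeSplitting (relAltitude R)) := fun a b hab =>
  hr.lt_of_relAltitude_lt (by simpa only [Set.apply_rangeSplitting, Subtype.coe_lt_coe])

theorem exists_monotone_relAltitude (hr : IsUnitIntervalRep R r) :
    ∃ q : α → K, (∀ i j, relAltitude R i ≤ relAltitude R j → q i ≤ q j) ∧
      IsUnitIntervalRep R q := by
  let classOf : α → Set.range (relAltitude R) := Set.rangeFactorization (relAltitude R)
  let rep : α → α := fun i => Set.rangeSplitting (relAltitude R) (classOf i)
  have relAltitude_rep (i : α) : relAltitude R (rep i) = relAltitude R i :=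
    Set.apply_rangeSplitting (relAltitude R) (classOf i)
  refine ⟨r ∘ rep, fun i j hij => hr.strictMono_comp_rangeSplitting.monotone hij, fun i j => ?_⟩
  exact (hr.rel_congr (relAltitude_rep i) (relAltitude_rep j)).symm.trans (hr (rep i) (rep j))

end LinearOrder

section Field

variable [Field K] [LinearOrder K] [IsStrictOrderedRing K]

theorem div_of_rel_iff_add_lt {c : K} (hc : 0 < c) (h : ∀ i j, R i j ↔ r i + c < r j) :
    IsUnitIntervalRep R fun i => r i / c := fun i j => by
  rw [h, div_add_one hc.ne', div_lt_div_iff_of_pos_right hc]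

theorem exists_gap [Finite α] (hr : IsUnitIntervalRep R r) :
    ∃ ε > 0, ∀ i j, R i j → r i + 1 + ε < r j := by
  obtain ⟨ε, hε, hgap⟩ := Pi.exists_forall_pos_add_lt
    fun p : {p : α × α // R p.1 p.2} => (hr p.1.1 p.1.2).1 p.2
  exact ⟨ε, hε, fun i j hij => hgap ⟨(i, j), hij⟩⟩

/-- The perturbation `δ * g` lies in `(0, δ)`, so with unit `1 + δ` it creates no new relation, and
it destroys none as long as `2 * δ` is at most the gap. -/
theorem exists_perturbation [Finite α] (hr : IsUnitIntervalRep R r) {g : α → K}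
    (hg : ∀ i, g i ∈ Set.Ioo 0 1) :
    ∃ q : α → K, (∀ i j, r i ≤ r j → g i < g j → q i < q j) ∧ IsUnitIntervalRep R q := by
  obtain ⟨ε, hε, hgap⟩ := hr.exists_gap
  obtain ⟨δ, hδ, rfl⟩ : ∃ δ > 0, 2 * δ = ε := ⟨ε / 2, half_pos hε, mul_div_cancel₀ ε two_ne_zero⟩
  have hunit : 0 < 1 + δ := by positivity
  have hpos (i : α) : 0 < δ * g i := mul_pos hδ (hg i).1
  have hlt (i : α) : δ * g i < δ := mul_lt_of_lt_one_right hδ (hg i).2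
  refine ⟨fun i => (r i + δ * g i) / (1 + δ), fun i j hrij hgij => ?_,
    div_of_rel_iff_add_lt hunit fun i j => ⟨fun hij => ?_, fun hij => (hr i j).2 ?_⟩⟩
  · exact div_lt_div_of_pos_right
      (add_lt_add_of_le_of_lt hrij (mul_lt_mul_of_pos_left hgij hδ)) hunit
  · linarith [hgap i j hij, hlt i, hpos j]
  · linarith [hpos i, hlt j]

theorem exists_strictMono [Finite α] [LinearOrder α] (hr : IsUnitIntervalRep R r)
    (hmono : Monotone r) : ∃ q : α → K, StrictMono q ∧ IsUnitIntervalRep R q := by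
  have : Infinite (Set.Ioo (0 : K) 1) := Set.Ioo.infinite zero_lt_one
  obtain ⟨g⟩ := Order.embedding_from_countable_to_dense α (Set.Ioo (0 : K) 1)
  obtain ⟨q, hq, hqR⟩ := hr.exists_perturbation fun i => (g i).2
  exact ⟨q, fun i j hij => hq i j (hmono hij.le) (g.strictMono hij), hqR⟩

end Field

end IsUnitIntervalRep

theorem isCanonicallyLabeled_iff_exists_strictMono_intervalRep_general
    {α K : Type*} [Finite α] [LinearOrder α] [Field K] [LinearOrder K] [IsStrictOrderedRing K]
    {R : α → α → Prop} (hR : ∃ r : α → K, IsUnitIntervalRep R r) :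
    (∀ i j, relAltitude R i < relAltitude R j → i < j) ↔
      ∃ q : α → K, StrictMono q ∧ IsUnitIntervalRep R q := by
  constructor
  · intro hlabel
    obtain ⟨r, hr⟩ := hR
    obtain ⟨q, hq, hqR⟩ := hr.exists_monotone_relAltitude
    exact hqR.exists_strictMono fun i j hij =>
      hq i j (le_of_not_gt fun hji => (hlabel j i hji).not_ge hij)
  · rintro ⟨q, hq, hqR⟩ i j hij
    exact hq.lt_iff_lt.1 (hqR.lt_of_relAltitude_lt hij)

/-- A unit interval order on `{1,…,n}` is canonically labeled iff it admits an interval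
representation `q` with `q 1 < q 2 < ⋯ < q n` (in the order of the integers, not of `P`). -/
theorem isCanonicallyLabeled_iff_exists_strictMono_intervalRep
    {n : ℕ} (P : PartialOrder (Fin n)) (hP : IsUnitIntervalOrder P) :
    IsCanonicallyLabeled P ↔
      ∃ q : Fin n → ℝ, (∀ i j : Fin n, i.val < j.val → q i < q j) ∧ IsIntervalRep P q := by
  rw [IsCanonicallyLabeled, altitude_eq_relAltitude]
  exact isCanonicallyLabeled_iff_exists_strictMono_intervalRep_general hP
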